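/- Let K be a field of characteristic 0 and S = K[x_1,...,x_n]. Let I ⊆ S be a 0-Borel (strongly stable) monomial ideal and P ⊆ S an opposite 0-Borel monomial ideal. Then dim_K (IP)_d ≥ dim_K (I^lex·P)_d for all d ≥ 0. -/

import Mathlib

open MvPolynomial TensorProduct CategoryTheory

noncomputable section

/-- The polynomial ring `S = K[x_1,...,x_n]`, standard graded. -/
abbrev PS (K : Type) [Field K] (n : ℕ) : Type := MvPolynomial (Fin n) K

variable (K : Type) [Field K] (n : ℕ)

/-- An ideal of `S` is homogeneous if it contains all homogeneous components of its
elements. -/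
def IsHomog (I : Ideal (PS K n)) : Prop :=
  ∀ f ∈ I, ∀ d : ℕ, MvPolynomial.homogeneousComponent d f ∈ I

/-- The change of coordinates of `S` induced by `g ∈ GL_n(K)`, determined by
`g(x_i) = ∑_j g_{ji} x_j`. -/
def coordChange (g : GL (Fin n) K) : PS K n →ₐ[K] PS K n :=
  MvPolynomial.aeval (fun i => ∑ j, ((g : Matrix (Fin n) (Fin n) K) j i) • MvPolynomial.X j)

/-- A property `P` holds for a general change of coordinates `g ∈ GL_n(K)` if there is a
nonempty Zariski open subset `U ⊆ GL_n(K)` on which it holds; equivalently (as `GL_n(K)` is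
an irreducible variety over the infinite field `K`) there is a nonzero polynomial `F` in the
matrix entries such that `P g` holds whenever `F` does not vanish at `g`. -/
def generally (P : GL (Fin n) K → Prop) : Prop :=
  ∃ F : MvPolynomial (Fin n × Fin n) K, F ≠ 0 ∧
    ∀ g : GL (Fin n) K,
      MvPolynomial.eval (fun p => (g : Matrix (Fin n) (Fin n) K) p.1 p.2) F ≠ 0 → P g

/-- The Hilbert function: `H(I,d) = dim_K I_d`. -/
def hilb (I : Ideal (PS K n)) (d : ℕ) : ℕ :=
  Module.finrank K ↥(Submodule.restrictScalars K I ⊓ homogeneousSubmodule (Fin n) K d)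

/-- `a <_lex b` for the lexicographic order induced by `x_1 > x_2 > ⋯ > x_n`. -/
def lexLt (a b : Fin n →₀ ℕ) : Prop := Finsupp.Lex (· < ·) (· < ·) a b

/-- `a <_oplex b` for the (opposite) lexicographic order induced by `x_n > ⋯ > x_1`. -/
def oplexLt (a b : Fin n →₀ ℕ) : Prop := Finsupp.Lex (· > ·) (· < ·) a b

/-- The total degree of an exponent vector. -/
def expDeg (m : Fin n →₀ ℕ) : ℕ := ∑ i, m i

/-- A monomial ideal: together with any polynomial it contains each of its monomials. -/
def IsMonomialIdeal (I : Ideal (PS K n)) : Prop :=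
  ∀ f ∈ I, ∀ m ∈ f.support, MvPolynomial.monomial m (1 : K) ∈ I

/-- A lex ideal: a monomial ideal whose monomials form a lex set. -/
def IsLexIdeal (I : Ideal (PS K n)) : Prop :=
  IsMonomialIdeal K n I ∧ ∀ u v : Fin n →₀ ℕ, expDeg n u = expDeg n v →
    MvPolynomial.monomial u (1 : K) ∈ I → lexLt n u v →
      MvPolynomial.monomial v (1 : K) ∈ I

/-- An opposite lex ideal: a monomial ideal whose monomials form an opposite lex set. -/
def IsOplexIdeal (I : Ideal (PS K n)) : Prop :=
  IsMonomialIdeal K n I ∧ ∀ u v : Fin n →₀ ℕ, expDeg n u = expDeg n v →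
    MvPolynomial.monomial u (1 : K) ∈ I → oplexLt n u v →
      MvPolynomial.monomial v (1 : K) ∈ I

/-- The initial ideal `in_r(I)` of `I` with respect to a (strict) monomial order `r`:
the ideal generated by the `r`-maximal monomials of the nonzero elements of `I`. -/
def initialIdealO (r : (Fin n →₀ ℕ) → (Fin n →₀ ℕ) → Prop) (I : Ideal (PS K n)) :
    Ideal (PS K n) :=
  Ideal.span {g | ∃ f ∈ I, ∃ m ∈ f.support,
    (∀ m' ∈ f.support, m' = m ∨ r m' m) ∧ g = MvPolynomial.monomial m (1 : K)}

/-- A 0-Borel (strongly stable) monomial ideal: for every monomial `u·x_j ∈ I` and every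
`i < j`, also `u·x_i ∈ I`. -/
def IsZeroBorel (I : Ideal (PS K n)) : Prop :=
  IsMonomialIdeal K n I ∧ ∀ m : Fin n →₀ ℕ, MvPolynomial.monomial m (1 : K) ∈ I →
    ∀ i j : Fin n, i < j → m j ≠ 0 →
      MvPolynomial.monomial (m + Finsupp.single i 1 - Finsupp.single j 1) (1 : K) ∈ I

/-- An opposite 0-Borel monomial ideal: for every monomial `u·x_j ∈ I` and every `j < i`,
also `u·x_i ∈ I`. -/
def IsOpZeroBorel (I : Ideal (PS K n)) : Prop :=
  IsMonomialIdeal K n I ∧ ∀ m : Fin n →₀ ℕ, MvPolynomial.monomial m (1 : K) ∈ I →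
    ∀ i j : Fin n, j < i → m j ≠ 0 →
      MvPolynomial.monomial (m + Finsupp.single i 1 - Finsupp.single j 1) (1 : K) ∈ I

/-! Everything happens on exponent vectors: `I`, `P` and `I^lex` become sets `A`, `P`, `L` of
exponents, the ideal product becomes the sumset, and the Hilbert function counts elements of a given
degree.

Green's inequality: if `A` is strongly stable, `L` is lex and `L` has at most as many elements as
`A` in degree `d`, then the same holds for the elements not involving the largest variable `x_κ`.
It is proved together with Macaulay's bound on shadows by induction on the number of variables, each
inequality in one set of variables feeding the other in the next.

Products: if `1 ∈ P` then `IP = I`. Otherwise split the monomials of `IP` by divisibility by `x_κ`.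
Those not divisible are handled by Green's inequality and induction on the variables. The others
form `IP : x_κ`, which equals `I (P : x_κ)`: in a factorization of `w x_κ` whose factor `x_κ` comes
from `I`, strong stability lets us trade it for any smaller variable of the factor from `P`, and
opposite stability allows the reverse trade in `P`. So induction on the degree finishes. -/

section ExponentSets

open Finset
open Finsupp (single)
open scoped Pointwise

variable {ι : Type*}

/-- Stability of a set of exponent vectors under replacing a variable `x_j` by `x_i` whenever
`r i j`: strong stability for `r = (· ≤ ·)`, opposite strong stability for `r = (· ≥ ·)`. -/
def ExchangeStable (r : ι → ι → Prop) (A : Set (ι →₀ ℕ)) : Prop :=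
  ∀ ⦃u : ι →₀ ℕ⦄ ⦃i j : ι⦄, r i j → u + single j 1 ∈ A → u + single i 1 ∈ A

/-- The exponents of the colon `A : x^v`. -/
def monomialColon (A : Set (ι →₀ ℕ)) (v : ι →₀ ℕ) : Set (ι →₀ ℕ) := {u | u + v ∈ A}

/-- The upper shadow of `A` in the variables of `s`: the products of a monomial of `A` with a
variable of `s`. -/
def monomialShadow (s : Finset ι) (A : Set (ι →₀ ℕ)) : Set (ι →₀ ℕ) :=
  A + (single · 1) '' (s : Set ι)

lemma mem_monomialColon {A : Set (ι →₀ ℕ)} {u v : ι →₀ ℕ} :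
    u ∈ monomialColon A v ↔ u + v ∈ A :=
  Iff.rfl

lemma monomialColon_zero (A : Set (ι →₀ ℕ)) : monomialColon A 0 = A := by
  ext u
  rw [mem_monomialColon, add_zero]

lemma monomialColon_monomialColon (A : Set (ι →₀ ℕ)) (v w : ι →₀ ℕ) :
    monomialColon (monomialColon A v) w = monomialColon A (w + v) := by
  ext u
  simp only [mem_monomialColon, add_assoc]

lemma mem_monomialShadow {s : Finset ι} {A : Set (ι →₀ ℕ)} {w : ι →₀ ℕ} :
    w ∈ monomialShadow s A ↔ ∃ u ∈ A, ∃ i ∈ s, u + single i 1 = w := by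
  simp [monomialShadow, Set.mem_add]

lemma exists_eq_add_single {u : ι →₀ ℕ} {i : ι} (hi : u i ≠ 0) : ∃ v, u = v + single i 1 :=
  ⟨u - single i 1,
    (tsub_add_cancel_of_le (Finsupp.single_le_iff.2 (Nat.one_le_iff_ne_zero.2 hi))).symm⟩

lemma eq_of_le_of_degree_eq {u v : ι →₀ ℕ} (hle : u ≤ v) (hdeg : u.degree = v.degree) :
    u = v := by
  obtain ⟨w, rfl⟩ := exists_add_of_le hle
  have hw : w.degree = 0 := by simpa using hdeg
  rw [(Finsupp.degree_eq_zero_iff w).1 hw, add_zero]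

lemma ExchangeStable.monomialColon {r : ι → ι → Prop} {A : Set (ι →₀ ℕ)}
    (hA : ExchangeStable r A) (v : ι →₀ ℕ) : ExchangeStable r (monomialColon A v) := by
  intro u i j hij hu
  rw [mem_monomialColon, add_right_comm] at hu ⊢
  exact hA hij hu

lemma add_eq_left_of_isUpperSet {A P : Set (ι →₀ ℕ)} (hA : IsUpperSet A) (hP : 0 ∈ P) :
    A + P = A := by
  refine Set.Subset.antisymm ?_ fun u hu => ⟨u, hu, 0, hP, add_zero u⟩
  rintro _ ⟨u, hu, v, -, rfl⟩
  exact hA le_self_add hu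

section Colon

variable [LinearOrder ι] {A P : Set (ι →₀ ℕ)} {s : Finset ι} {κ : ι}

lemma monomialColon_monomialShadow_insert (hA : ExchangeStable (· ≤ ·) A) (hκ : ∀ i ∈ s, i < κ) :
    monomialColon (monomialShadow (insert κ s) A) (single κ 1) = A := by
  ext w
  rw [mem_monomialColon, mem_monomialShadow]
  refine ⟨?_, fun hw => ⟨w, hw, κ, mem_insert_self κ s, rfl⟩⟩
  rintro ⟨u, hu, i, hi, hw⟩
  obtain rfl | his := mem_insert.1 hi
  · rwa [← add_right_cancel hw]
  have huκ : u κ ≠ 0 := by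
    have := DFunLike.congr_fun hw κ
    rw [Finsupp.add_apply, Finsupp.add_apply, Finsupp.single_eq_same,
      Finsupp.single_eq_of_ne (hκ i his).ne'] at this
    omega
  obtain ⟨x, rfl⟩ := exists_eq_add_single huκ
  rw [add_right_comm, add_left_inj] at hw
  exact hw ▸ hA (hκ i his).le hu

lemma monomialShadow_monomialColon_succ_subset (hA : ExchangeStable (· ≤ ·) A)
    (hκ : ∀ i ∈ s, i < κ) (e : ℕ) :
    monomialShadow s (monomialColon A (single κ (e + 1))) ⊆ monomialColon A (single κ e) := by
  intro w hw
  obtain ⟨u, hu, i, hi, rfl⟩ := mem_monomialShadow.1 hw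
  rw [mem_monomialColon, Finsupp.single_add, ← add_assoc] at hu
  rw [mem_monomialColon, add_right_comm]
  exact hA (hκ i hi).le hu

lemma mem_add_monomialColon_single_iff (hA : ExchangeStable (· ≤ ·) A)
    (hP : ExchangeStable (· ≥ ·) P) (hP0 : 0 ∉ P) {w : ι →₀ ℕ} (hw : ∀ i ∈ w.support, i ≤ κ) :
    w ∈ A + monomialColon P (single κ 1) ↔ w ∈ monomialColon (A + P) (single κ 1) := by
  constructor
  · rintro ⟨u, hu, v, hv, rfl⟩
    exact ⟨u, hu, v + single κ 1, hv, (add_assoc _ _ _).symm⟩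
  rintro ⟨u, hu, v, hv, huv : u + v = w + single κ 1⟩
  by_cases huκ : u κ = 0
  · have hvκ : v κ ≠ 0 := by
      have := DFunLike.congr_fun huv κ
      rw [Finsupp.add_apply, Finsupp.add_apply, huκ, Finsupp.single_eq_same] at this
      omega
    obtain ⟨v, rfl⟩ := exists_eq_add_single hvκ
    rw [← add_assoc, add_left_inj] at huv
    exact ⟨u, hu, v, hv, huv⟩
  obtain ⟨j, hj⟩ := Finsupp.ne_iff.1 (ne_of_mem_of_not_mem hv hP0)
  have hjκ : j ≤ κ := by
    by_contra hκj
    have hwj : w j = 0 := Finsupp.notMem_support_iff.1 fun h => hκj (hw j h)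
    have := DFunLike.congr_fun huv j
    rw [Finsupp.add_apply, Finsupp.add_apply, hwj,
      Finsupp.single_eq_of_ne (ne_of_not_le hκj), add_zero] at this
    exact hj (Nat.eq_zero_of_add_eq_zero_left this)
  obtain ⟨u, rfl⟩ := exists_eq_add_single huκ
  obtain ⟨v, rfl⟩ := exists_eq_add_single hj
  refine ⟨u + single j 1, hA hjκ hu, v, hP hjκ hv, ?_⟩
  rw [add_right_comm, add_left_inj] at huv
  exact ((add_right_comm u _ v).trans (add_assoc u v _)).trans huv

end Colon

section LexSets

variable [LinearOrder ι] {A L : Set (ι →₀ ℕ)}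

/-- A lex set: in each degree, closed under passing to lexicographically larger exponents. -/
def IsLexSet (A : Set (ι →₀ ℕ)) : Prop :=
  ∀ ⦃u v : ι →₀ ℕ⦄, u.degree = v.degree → toLex u < toLex v → u ∈ A → v ∈ A

/-- The exponents lexicographically at least `u`, of any degree. -/
def lexSegment (u : ι →₀ ℕ) : Set (ι →₀ ℕ) := {v | toLex u ≤ toLex v}

lemma isLexSet_lexSegment (u : ι →₀ ℕ) : IsLexSet (lexSegment u) :=
  fun _ _ _ hlt hu => le_trans hu hlt.le

lemma IsLexSet.exchangeStable (hA : IsLexSet A) : ExchangeStable (· ≤ ·) A := by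
  intro u i j hij hu
  obtain rfl | hij := hij.eq_or_lt
  · exact hu
  refine hA (by simp) ?_ hu
  simpa only [toLex_add] using add_lt_add_right (Finsupp.Lex.single_strictAnti hij) (toLex u)

lemma toLex_lt_of_agree_below {u v u' v' : ι →₀ ℕ} {m : ι} (hdeg : u.degree = v.degree)
    (hu : ∀ i ∈ u.support, i ≤ m) (hlt : toLex u < toLex v) (hu' : ∀ i < m, u' i = u i)
    (hv' : ∀ i < m, v' i = v i) : toLex u' < toLex v' := by
  obtain ⟨p, hbelow : ∀ i < p, u i = v i, hp : u p < v p⟩ := Finsupp.Lex.lt_iff.1 hlt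
  have hpm : p < m := by
    by_contra! hmp
    have hle : u ≤ v := by
      intro i
      obtain hip | rfl | hpi := lt_trichotomy i p
      · exact (hbelow i hip).le
      · exact hp.le
      · have hui : u i = 0 :=
          Finsupp.notMem_support_iff.1 fun hi => (hmp.trans_lt hpi).not_ge (hu i hi)
        exact hui ▸ Nat.zero_le _
    exact hp.ne (DFunLike.congr_fun (eq_of_le_of_degree_eq hle hdeg) p)
  refine Finsupp.Lex.lt_iff.2 ⟨p, fun i hi => ?_, ?_⟩
  · exact (hu' i (hi.trans hpm)).trans ((hbelow i hi).trans (hv' i (hi.trans hpm)).symm)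
  · exact (hu' p hpm).trans_lt (hp.trans_eq (hv' p hpm).symm)

end LexSets

section Counting

variable [DecidableEq ι] {A B : Set (ι →₀ ℕ)} {s : Finset ι} {κ : ι} {d : ℕ} {u : ι →₀ ℕ}

lemma mem_finsuppAntidiag_iff_degree :
    u ∈ s.finsuppAntidiag d ↔ u.degree = d ∧ u.support ⊆ s :=
  mem_finsuppAntidiag'

lemma add_single_mem_finsuppAntidiag (hκ : κ ∈ s) (e : ℕ) :
    u + single κ e ∈ s.finsuppAntidiag (d + e) ↔ u ∈ s.finsuppAntidiag d := by
  rw [mem_finsuppAntidiag_iff_degree, mem_finsuppAntidiag_iff_degree, map_add,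
    Finsupp.degree_single, add_left_inj]
  refine and_congr_right fun _ => ⟨fun h => ?_, fun h => ?_⟩
  · exact (Finsupp.support_mono le_self_add).trans h
  · exact Finsupp.support_add.trans
      (union_subset h (Finsupp.support_single_subset.trans (singleton_subset_iff.2 hκ)))

open Classical in
/-- The number of elements of `A` of degree `d` in the variables of `s`. -/
def monomialCount (s : Finset ι) (d : ℕ) (A : Set (ι →₀ ℕ)) : ℕ :=
  #{u ∈ s.finsuppAntidiag d | u ∈ A}

lemma monomialCount_mono (h : ∀ u ∈ s.finsuppAntidiag d, u ∈ A → u ∈ B) :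
    monomialCount s d A ≤ monomialCount s d B := by
  classical
  refine card_le_card fun u hu => ?_
  rw [mem_filter] at hu ⊢
  exact ⟨hu.1, h u hu.1 hu.2⟩

lemma monomialCount_congr (h : ∀ u ∈ s.finsuppAntidiag d, u ∈ A ↔ u ∈ B) :
    monomialCount s d A = monomialCount s d B :=
  le_antisymm (monomialCount_mono fun u hu => (h u hu).1)
    (monomialCount_mono fun u hu => (h u hu).2)

lemma exists_of_monomialCount_lt (h : monomialCount s d A < monomialCount s d B) :
    ∃ u ∈ s.finsuppAntidiag d, u ∈ B ∧ u ∉ A := by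
  by_contra! hBA
  exact h.not_ge (monomialCount_mono hBA)

lemma finsuppAntidiag_insert_succ (d : ℕ) :
    (insert κ s).finsuppAntidiag (d + 1) = s.finsuppAntidiag (d + 1) ∪
      ((insert κ s).finsuppAntidiag d).map (addRightEmbedding (single κ 1)) := by
  ext w
  simp only [mem_union, mem_map, addRightEmbedding_apply]
  constructor
  · intro hw
    by_cases hwκ : w κ = 0
    · left
      rw [mem_finsuppAntidiag_iff_degree] at hw ⊢
      exact ⟨hw.1, (subset_insert_iff_of_notMem (Finsupp.notMem_support_iff.2 hwκ)).1 hw.2⟩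
    · right
      obtain ⟨u, rfl⟩ := exists_eq_add_single hwκ
      exact ⟨u, (add_single_mem_finsuppAntidiag (mem_insert_self κ s) 1).1 hw, rfl⟩
  · rintro (hw | ⟨u, hu, rfl⟩)
    · exact finsuppAntidiag_mono (subset_insert κ s) _ hw
    · exact (add_single_mem_finsuppAntidiag (mem_insert_self κ s) 1).2 hu

lemma monomialCount_insert_succ (hκ : κ ∉ s) (d : ℕ) (A : Set (ι →₀ ℕ)) :
    monomialCount (insert κ s) (d + 1) A = monomialCount s (d + 1) A +
      monomialCount (insert κ s) d (monomialColon A (single κ 1)) := by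
  classical
  have hdisj : Disjoint (s.finsuppAntidiag (d + 1))
      (((insert κ s).finsuppAntidiag d).map (addRightEmbedding (single κ 1))) := by
    rw [disjoint_left]
    intro w hw hw'
    obtain ⟨u, -, rfl⟩ := mem_map.1 hw'
    exact hκ ((mem_finsuppAntidiag_iff_degree.1 hw).2 (by simp))
  simp only [monomialCount, finsuppAntidiag_insert_succ]
  rw [filter_union, card_union_of_disjoint (disjoint_filter_filter hdisj), filter_map, card_map]
  rfl

lemma monomialCount_insert (hκ : κ ∉ s) (d : ℕ) (A : Set (ι →₀ ℕ)) :
    monomialCount (insert κ s) d A =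
      ∑ p ∈ antidiagonal d, monomialCount s p.2 (monomialColon A (single κ p.1)) := by
  induction d generalizing A with
  | zero =>
    rw [Nat.antidiagonal_zero, sum_singleton, Finsupp.single_zero, monomialColon_zero]
    simp only [monomialCount, finsuppAntidiag_zero]
  | succ d ih =>
    rw [monomialCount_insert_succ hκ, ih, Nat.sum_antidiagonal_succ, Finsupp.single_zero,
      monomialColon_zero]
    simp only [monomialColon_monomialColon, Finsupp.single_add]

lemma monomialCount_monomialShadow_insert (d : ℕ) :
    monomialCount s d (monomialShadow (insert κ s) A) = monomialCount s d (monomialShadow s A) := by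
  refine monomialCount_congr fun w hw => ?_
  simp only [mem_monomialShadow]
  constructor
  · rintro ⟨u, hu, i, -, rfl⟩
    exact ⟨u, hu, i, (mem_finsuppAntidiag_iff_degree.1 hw).2 (by simp), rfl⟩
  · rintro ⟨u, hu, i, hi, rfl⟩
    exact ⟨u, hu, i, mem_insert_of_mem hi, rfl⟩

end Counting

section MacaulayGreen

variable [LinearOrder ι] {A L : Set (ι →₀ ℕ)} {s : Finset ι} {κ τ : ι} {d : ℕ} {u : ι →₀ ℕ}

lemma exists_notMem_monomialCount_lexSegment_le
    (h : monomialCount s d L < monomialCount s d A) :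
    ∃ u ∈ s.finsuppAntidiag d, u ∉ L ∧
      monomialCount s d (lexSegment u) ≤ monomialCount s d A := by
  classical
  obtain ⟨v, hv, -, hvL⟩ := exists_of_monomialCount_lt h
  obtain ⟨u, hu, hmax⟩ := exists_max_image {u ∈ s.finsuppAntidiag d | u ∉ L} toLex
    ⟨v, mem_filter.2 ⟨hv, hvL⟩⟩
  rw [mem_filter] at hu
  refine ⟨u, hu.1, hu.2, le_trans ?_ (Nat.succ_le_of_lt h)⟩
  refine (card_le_card fun w hw => ?_).trans (card_insert_le u _)
  rw [mem_filter] at hw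
  rw [mem_insert, mem_filter]
  by_cases hwL : w ∈ L
  · exact Or.inr ⟨hw.1, hwL⟩
  · exact Or.inl (toLex.injective (le_antisymm (hmax w (mem_filter.2 ⟨hw.1, hwL⟩)) hw.2))

/-- Macaulay's inequality in the variables of `s`: lex sets have the smallest shadows among strongly
stable sets with at least as many elements. -/
def MacaulayInequality (s : Finset ι) : Prop :=
  ∀ ⦃d : ℕ⦄ ⦃A L : Set (ι →₀ ℕ)⦄, ExchangeStable (· ≤ ·) A → IsLexSet L →
    monomialCount s d L ≤ monomialCount s d A →
      monomialCount s (d + 1) (monomialShadow s L) ≤ monomialCount s (d + 1) (monomialShadow s A)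

lemma lexSegment_add_single_subset_monomialShadow (hτ : ∀ i ∈ s, i ≤ τ)
    (hu : u ∈ s.finsuppAntidiag d) {w : ι →₀ ℕ} (hw : w ∈ s.finsuppAntidiag (d + 1))
    (huw : w ∈ lexSegment (u + single τ 1)) : w ∈ monomialShadow s (lexSegment u) := by
  rw [mem_finsuppAntidiag_iff_degree] at hu hw
  have hne : w.support.Nonempty := by
    rw [Finsupp.support_nonempty_iff]
    rintro rfl
    simp at hw
  obtain ⟨m, hm, hmax⟩ := exists_max_image w.support id hne
  obtain ⟨v, rfl⟩ := exists_eq_add_single (Finsupp.mem_support_iff.1 hm)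
  have hvm : ∀ i ∈ v.support, i ≤ m := fun i hi => hmax i (Finsupp.support_mono le_self_add hi)
  have hdeg : v.degree = u.degree := by
    rw [hu.1]
    simpa using hw.1
  refine mem_monomialShadow.2 ⟨v, ?_, m, hw.2 hm, rfl⟩
  by_contra hvu
  refine not_lt_of_ge huw (toLex_lt_of_agree_below hdeg hvm (not_le.1 hvu) ?_ ?_)
  · intro i hi
    simp [hi.ne]
  · intro i hi
    simp [(hi.trans_le (hτ m (hw.2 hm))).ne]

lemma monomialCount_lexSegment_add_single_le (hmac : MacaulayInequality s)
    (hκ : ∀ i ∈ s, i < κ) (hτs : τ ∈ s) (hτ : ∀ i ∈ s, i ≤ τ) (hA : ExchangeStable (· ≤ ·) A)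
    {e : ℕ} (hu : u ∈ s.finsuppAntidiag d)
    (h : monomialCount s d (lexSegment u) ≤
      monomialCount s d (monomialColon A (single κ e))) :
    monomialCount s (d + e) (lexSegment (u + single τ e)) ≤ monomialCount s (d + e) A := by
  induction e generalizing d u with
  | zero => simpa [monomialColon_zero] using h
  | succ e ih =>
    have hstep : monomialCount s (d + 1) (lexSegment (u + single τ 1)) ≤
        monomialCount s (d + 1) (monomialColon A (single κ e)) :=
      calc monomialCount s (d + 1) (lexSegment (u + single τ 1))
        _ ≤ monomialCount s (d + 1) (monomialShadow s (lexSegment u)) :=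
          monomialCount_mono fun _ => lexSegment_add_single_subset_monomialShadow hτ hu
        _ ≤ monomialCount s (d + 1) (monomialShadow s (monomialColon A (single κ (e + 1)))) :=
          hmac (hA.monomialColon _) (isLexSet_lexSegment u) h
        _ ≤ monomialCount s (d + 1) (monomialColon A (single κ e)) :=
          monomialCount_mono fun _ _ hw => monomialShadow_monomialColon_succ_subset hA hκ e hw
    have := ih ((add_single_mem_finsuppAntidiag hτs 1).2 hu) hstep
    rwa [add_assoc u, ← Finsupp.single_add, add_assoc, add_comm 1 e] at this

lemma monomialCount_monomialColon_le_of_lt (hmac : MacaulayInequality s) (hκ : ∀ i ∈ s, i < κ)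
    (hA : ExchangeStable (· ≤ ·) A) (hL : IsLexSet L) {e : ℕ}
    (hlt : monomialCount s (d + e) A < monomialCount s (d + e) L) :
    monomialCount s d (monomialColon A (single κ e)) ≤
      monomialCount s d (monomialColon L (single κ e)) := by
  obtain ⟨v, hv, -, -⟩ := exists_of_monomialCount_lt hlt
  obtain rfl | hs := s.eq_empty_or_nonempty
  · rw [mem_finsuppAntidiag_iff_degree, subset_empty, Finsupp.support_eq_empty] at hv
    obtain ⟨rfl, rfl⟩ : d = 0 ∧ e = 0 := by simpa [hv.2] using hv.1.symm
    simpa [monomialColon_zero] using hlt.le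
  obtain ⟨hτs, hτ⟩ : s.max' hs ∈ s ∧ ∀ i ∈ s, i ≤ s.max' hs := ⟨s.max'_mem hs, s.le_max'⟩
  generalize s.max' hs = τ at hτs hτ
  -- Some `u ∉ L : x_κ^e` has a lex segment no larger than `A : x_κ^e`. Taking shadows `e` times
  -- bounds the segment of `u x_τ^e` by `A`, so `L` contains some `w` below `u x_τ^e`. Then `w` is
  -- also below `u x_κ^e`, forcing `u x_κ^e ∈ L`.
  by_contra! hcolon
  obtain ⟨u, hu, huL, hcount⟩ := exists_notMem_monomialCount_lexSegment_le hcolon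
  obtain ⟨w, hw, hwL, hwu⟩ := exists_of_monomialCount_lt
    ((monomialCount_lexSegment_add_single_le hmac hκ hτs hτ hA hu hcount).trans_lt hlt)
  rw [mem_finsuppAntidiag_iff_degree] at hu hw
  have hlex : toLex w < toLex (u + single κ e) :=
    toLex_lt_of_agree_below (by simp [hu.1, hw.1]) (fun i hi => hτ i (hw.2 hi)) (not_le.1 hwu)
      (fun _ _ => rfl) fun i hi => by simp [hi.ne, (hi.trans (hκ τ hτs)).ne]
  exact huL (hL (by simp [hu.1, hw.1]) hlex hwL)

theorem MacaulayInequality.green (hmac : MacaulayInequality s) (hκ : ∀ i ∈ s, i < κ)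
    (hA : ExchangeStable (· ≤ ·) A) (hL : IsLexSet L)
    (h : monomialCount (insert κ s) d L ≤ monomialCount (insert κ s) d A) :
    monomialCount s d L ≤ monomialCount s d A := by
  by_contra! hlt
  have hκs : κ ∉ s := fun hmem => (hκ κ hmem).false
  refine h.not_gt ?_
  rw [monomialCount_insert hκs, monomialCount_insert hκs]
  refine sum_lt_sum (fun p hp => ?_) ⟨(0, d), by simp, by simpa [monomialColon_zero] using hlt⟩
  rw [← mem_antidiagonal.1 hp, add_comm] at hlt
  exact monomialCount_monomialColon_le_of_lt hmac hκ hA hL hlt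

lemma monomialCount_insert_monomialShadow_insert (hκ : ∀ i ∈ s, i < κ)
    (hA : ExchangeStable (· ≤ ·) A) (d : ℕ) :
    monomialCount (insert κ s) (d + 1) (monomialShadow (insert κ s) A) =
      monomialCount s (d + 1) (monomialShadow s A) + monomialCount (insert κ s) d A := by
  rw [monomialCount_insert_succ fun hmem => (hκ κ hmem).false,
    monomialColon_monomialShadow_insert hA hκ, monomialCount_monomialShadow_insert]

theorem macaulayInequality (s : Finset ι) : MacaulayInequality s := by
  induction s using induction_on_max with
  | empty => simp [MacaulayInequality, monomialCount]
  | insert κ s hκ ih =>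
    intro d A L hA hL h
    rw [monomialCount_insert_monomialShadow_insert hκ hA,
      monomialCount_insert_monomialShadow_insert hκ hL.exchangeStable]
    exact add_le_add (ih hA hL (ih.green hκ hA hL h)) h

lemma monomialCount_eq_zero_of_degree_zero (h : 0 ∉ A) : monomialCount s 0 A = 0 := by
  simp [monomialCount, filter_singleton, h]

theorem monomialCount_add_le {P : Set (ι →₀ ℕ)} (hA : ExchangeStable (· ≤ ·) A)
    (hA' : IsUpperSet A) (hL : IsLexSet L) (hL' : IsUpperSet L) (hP : ExchangeStable (· ≥ ·) P)
    (h : ∀ d, monomialCount s d L ≤ monomialCount s d A) (d : ℕ) :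
    monomialCount s d (L + P) ≤ monomialCount s d (A + P) := by
  induction d generalizing P s with
  | zero =>
    by_cases hP0 : 0 ∈ P
    · simpa only [add_eq_left_of_isUpperSet hA' hP0, add_eq_left_of_isUpperSet hL' hP0] using h 0
    · have hLP : (0 : ι →₀ ℕ) ∉ L + P := by
        rintro ⟨u, -, v, hv, huv : u + v = 0⟩
        exact hP0 ((add_eq_zero.1 huv).2 ▸ hv)
      exact (monomialCount_eq_zero_of_degree_zero hLP).trans_le (Nat.zero_le _)
  | succ d ihd =>
    by_cases hP0 : 0 ∈ P
    · simpa only [add_eq_left_of_isUpperSet hA' hP0, add_eq_left_of_isUpperSet hL' hP0] using h _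
    induction s using induction_on_max with
    | empty => simp [monomialCount]
    | insert κ s hκ ihs =>
      have hcolon {X : Set (ι →₀ ℕ)} (hX : ExchangeStable (· ≤ ·) X) :
          monomialCount (insert κ s) d (monomialColon (X + P) (single κ 1)) =
            monomialCount (insert κ s) d (X + monomialColon P (single κ 1)) := by
        refine monomialCount_congr fun w hw => (mem_add_monomialColon_single_iff hX hP hP0 ?_).symm
        intro i hi
        obtain rfl | his := mem_insert.1 ((mem_finsuppAntidiag_iff_degree.1 hw).2 hi)
        exacts [le_rfl, (hκ i his).le]
      have hκs : κ ∉ s := fun hmem => (hκ κ hmem).false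
      rw [monomialCount_insert_succ hκs, monomialCount_insert_succ hκs, hcolon hA,
        hcolon hL.exchangeStable]
      exact add_le_add (ihs fun e => (macaulayInequality s).green hκ hA hL (h e))
        (ihd (hP.monomialColon _) h)

end MacaulayGreen

end ExponentSets

section Ideals

open scoped Pointwise

variable {K n} {I J P : Ideal (PS K n)}

/-- The exponent vectors of the monomials of an ideal. -/
def exponents (J : Ideal (PS K n)) : Set (Fin n →₀ ℕ) := {u | monomial u (1 : K) ∈ J}

lemma isUpperSet_exponents (J : Ideal (PS K n)) : IsUpperSet (exponents J) := by
  intro u v huv (hu : monomial u 1 ∈ J)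
  obtain ⟨w, rfl⟩ := exists_add_of_le huv
  have := J.mul_mem_left (monomial w 1) hu
  rwa [monomial_mul, one_mul, add_comm] at this

lemma IsMonomialIdeal.restrictScalars_eq (hJ : IsMonomialIdeal K n J) :
    J.restrictScalars K = restrictSupport K (exponents J) := by
  refine le_antisymm (fun f hf => (mem_restrictSupport_iff K).2 (hJ f hf)) ?_
  rw [restrictSupport_eq_span, Submodule.span_le]
  rintro _ ⟨u, hu, rfl⟩
  exact hu

lemma IsMonomialIdeal.restrictScalars_mul_eq (hI : IsMonomialIdeal K n I)
    (hP : IsMonomialIdeal K n P) :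
    (I * P).restrictScalars K = restrictSupport K (exponents I + exponents P) := by
  rw [restrictSupport_add, ← hI.restrictScalars_eq, ← hP.restrictScalars_eq]
  exact Submodule.restrictScalars_mul

lemma hilb_eq_monomialCount {A : Set (Fin n →₀ ℕ)} (hJ : J.restrictScalars K = restrictSupport K A)
    (d : ℕ) : hilb K n J d = monomialCount Finset.univ d A := by
  classical
  have hset : (({u ∈ Finset.univ.finsuppAntidiag d | u ∈ A} : Finset (Fin n →₀ ℕ)) : Set _) =
      A ∩ {u | u.degree = d} := by
    ext u
    simp [Finsupp.degree_eq_sum, and_comm]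
  have hinf : restrictSupport K A ⊓ homogeneousSubmodule (Fin n) K d =
      restrictSupport K (A ∩ {u | u.degree = d}) := by
    rw [homogeneousSubmodule_eq_finsupp_supported]
    ext f
    exact Set.subset_inter_iff.symm
  rw [hilb, hJ, hinf, Module.finrank_eq_nat_card_basis (basisRestrictSupport K _), ← hset,
    Nat.card_coe_set_eq, Set.ncard_coe_finset, monomialCount]

lemma IsZeroBorel.exchangeStable (hI : IsZeroBorel K n I) :
    ExchangeStable (· ≤ ·) (exponents I) := by
  intro u i j hij hu
  obtain rfl | hij := hij.eq_or_lt
  · exact hu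
  have := hI.2 _ hu i j hij (by simp)
  rwa [add_right_comm, add_tsub_cancel_right] at this

lemma IsOpZeroBorel.exchangeStable (hP : IsOpZeroBorel K n P) :
    ExchangeStable (· ≥ ·) (exponents P) := by
  intro u i j hij hu
  obtain rfl | hij := (ge_iff_le.1 hij).eq_or_lt
  · exact hu
  have := hP.2 _ hu i j hij (by simp)
  rwa [add_right_comm, add_tsub_cancel_right] at this

lemma IsLexIdeal.isLexSet (hJ : IsLexIdeal K n J) : IsLexSet (exponents J) := by
  intro u v hdeg hlt hu
  refine hJ.2 u v ?_ hu hlt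
  rwa [expDeg, expDeg, ← Finsupp.degree_eq_sum, ← Finsupp.degree_eq_sum]

end Ideals

theorem dim_borel_product_ge_general (I P : Ideal (PS K n)) (hI : IsZeroBorel K n I)
    (hP : IsOpZeroBorel K n P) (Ilex : Ideal (PS K n)) (hIlex : IsLexIdeal K n Ilex)
    (hIlexHilb : ∀ d : ℕ, hilb K n Ilex d ≤ hilb K n I d) :
    ∀ d : ℕ, hilb K n (Ilex * P) d ≤ hilb K n (I * P) d := by
  intro d
  rw [hilb_eq_monomialCount (hIlex.1.restrictScalars_mul_eq hP.1),
    hilb_eq_monomialCount (hI.1.restrictScalars_mul_eq hP.1)]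
  refine monomialCount_add_le hI.exchangeStable (isUpperSet_exponents I) hIlex.isLexSet
    (isUpperSet_exponents Ilex) hP.exchangeStable (fun e => ?_) d
  rw [← hilb_eq_monomialCount hIlex.1.restrictScalars_eq,
    ← hilb_eq_monomialCount hI.1.restrictScalars_eq]
  exact hIlexHilb e

/-- **Lemma 3.5** (Caviglia–Murai): let `char K = 0`, `I ⊆ S` a 0-Borel (strongly stable)
ideal and `P ⊆ S` an opposite 0-Borel ideal.  Then `dim_K (IP)_d ≥ dim_K (I^lex·P)_d`
for all `d ≥ 0`. -/
theorem dim_borel_product_ge [CharZero K]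
    (I P : Ideal (PS K n)) (hI : IsZeroBorel K n I) (hP : IsOpZeroBorel K n P)
    (Ilex : Ideal (PS K n)) (hIlex : IsLexIdeal K n Ilex)
    (hIlexHilb : ∀ d : ℕ, hilb K n Ilex d = hilb K n I d) :
    ∀ d : ℕ, hilb K n (Ilex * P) d ≤ hilb K n (I * P) d :=
  dim_borel_product_ge_general K n I P hI hP Ilex hIlex fun d => (hIlexHilb d).le

end
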